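/- Let m ≥ 1, let n₀ be an even integer with 0 ≤ n₀ ≤ m, let Θ ∈ GL_{n₀}(ℤ_2) ∩ S_{n₀}(ℤ_2)_e, and let B₁ ∈ S_{m-n₀}(ℤ_2)^×. Set j = 0 if m is even and j = 1 if m is odd. Then the map W ↦ 1_{n₀} ⊥ W induces a bijection from GL_{m-n₀}(ℤ_2)\Ω̃^{(j)}(2^{j+1}B₁) onto GL_m(ℤ_2)\Ω̃^{(j)}(2^jΘ ⊥ 2^{j+1}B₁); moreover, for every i ≥ 0, this bijection restricts to a bijection between the orbits contained in D_{m-n₀,i} and the orbits contained in D_{m,i}. -/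

import Mathlib

/-!
All conditions defining `Ω̃^{(j)}(B)` are first rewritten over `ℤ_2`. A matrix lies in `L^{(j)}`
exactly when it is nondegenerate and equals `C = 2^j (T + Tᵀ) - j rᵀr` with `T`, `r` integral
(`InE`; a symmetric matrix with even diagonal is `T + Tᵀ`). Hence `W ∈ Ω̃^{(j)}(B)` iff `det W ≠ 0`
and `Wᵀ C W = B` for some `C` of this shape (`mem_OmTJ`), and the shape is visibly preserved by
`C ↦ Uᵀ C U` for every integral, possibly rectangular, `U`.

Surjectivity (`exists_factor`). Let `Vᵀ C V = 2^j Θ ⊥ D` and `V = [V₁ | V₂]`. The entries of `C V₁`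
are divisible by `2^j`: for `j = 1` the diagonal of `V₁ᵀ C V₁ = 2Θ` shows `4 ∣ (r V₁)_i²`, so
`r V₁ ≡ 0 mod 2`. Writing `C V₁ = 2^j M`, the matrix `L = Θ⁻¹ Mᵀ` is integral with `L V₁ = 1` and
`L V₂ = 0`. Since the kernel of `L` is free of rank `k` over the principal ideal domain `ℤ_2`,
there is `N` with `[V₁ | N]` invertible and `L N = 0` (`exists_completion`); then `V₂ = N W` and
`V = [V₁ | N] (1 ⊥ W)`, while `Wᵀ (Nᵀ C N) W = D`.

Injectivity is block multiplication (`sameLeft_iff`). For the double cosets (`Dset_iff`), put `W`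
into Smith normal form `P diag(d) Q`. If `1 ⊥ W ∈ D_{m,i}`, then `1 ⊥ W`, hence `W`, divides `2`,
so every `d_l` divides `2`, and comparing determinants shows that exactly `i` of them are
non-units.
-/

open Matrix Filter

open scoped Classical

noncomputable section

namespace KM

variable (p : ℕ) [Fact p.Prime]

/-- Entrywise coercion of a `ℤ_[p]`-matrix into `ℚ_[p]`. -/
def q {n m : Type*} (A : Matrix n m ℤ_[p]) : Matrix n m ℚ_[p] :=
  A.map (fun x : ℤ_[p] => (x : ℚ_[p]))

/-- `ℤ_p`-equivalence of symmetric matrices with entries in `ℤ_p`. -/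
def IntEquiv {n : Type*} [Fintype n] [DecidableEq n]
    (A B : Matrix n n ℤ_[p]) : Prop :=
  ∃ U : Matrix n n ℤ_[p], IsUnit U.det ∧ B = Uᵀ * A * U

/-- `ℤ_p`-equivalence of `ℤ_p`-matrices up to reindexing (for index types of
the same cardinality). -/
def IntEquivR {n n' : Type*} [Fintype n] [DecidableEq n] [Fintype n'] [DecidableEq n']
    (A : Matrix n n ℤ_[p]) (B : Matrix n' n' ℤ_[p]) : Prop :=
  ∃ e : n ≃ n', IntEquiv p A (B.submatrix e e)

/-- `ℤ_p`-equivalence of symmetric matrices with entries in `ℚ_p`. -/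
def RatEquiv {n : Type*} [Fintype n] [DecidableEq n]
    (A B : Matrix n n ℚ_[p]) : Prop :=
  ∃ U : Matrix n n ℤ_[p], IsUnit U.det ∧ B = (q p U)ᵀ * A * (q p U)

/-- `ℤ_p`-equivalence of `ℚ_p`-matrices up to reindexing. -/
def RatEquivR {n n' : Type*} [Fintype n] [DecidableEq n] [Fintype n'] [DecidableEq n']
    (A : Matrix n n ℚ_[p]) (B : Matrix n' n' ℚ_[p]) : Prop :=
  ∃ e : n ≃ n', RatEquiv p A (B.submatrix e e)

/-- A matrix over `ℚ_p` is half-integral: symmetric, diagonal entries in `ℤ_p`,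
off-diagonal entries in `(1/2)ℤ_p`. -/
def IsHalfIntegral {n : Type*} [DecidableEq n] (A : Matrix n n ℚ_[p]) : Prop :=
  A.IsSymm ∧ ∀ i j, ∃ x : ℤ_[p], A i j = (if i = j then 1 else 2⁻¹) * (x : ℚ_[p])

/-- `A ∈ 4·L_{m,p}`. -/
def InFourL {n : Type*} [DecidableEq n] (A : Matrix n n ℚ_[p]) : Prop :=
  IsHalfIntegral p ((4 : ℚ_[p])⁻¹ • A)

/-- The rank-one matrix `rᵀ r` viewed over `ℚ_p`. -/
def outer {n : Type*} (r : n → ℤ_[p]) : Matrix n n ℚ_[p] :=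
  Matrix.of fun i j => ((r i : ℚ_[p]) * (r j : ℚ_[p]))

/-- The matrix `A^{(1)} = [[1, r/2], [rᵀ/2, (A + rᵀr)/4]]`. -/
def Aone {n : Type*} [Fintype n] [DecidableEq n]
    (A : Matrix n n ℚ_[p]) (r : n → ℤ_[p]) :
    Matrix (Fin 1 ⊕ n) (Fin 1 ⊕ n) ℚ_[p] :=
  Matrix.fromBlocks 1 (Matrix.of fun _ j => (r j : ℚ_[p]) / 2)
    (Matrix.of fun i _ => (r i : ℚ_[p]) / 2)
    ((4 : ℚ_[p])⁻¹ • (A + outer p r))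

/-- A `ℚ_p`-matrix has all entries in `ℤ_p`. -/
def IsIntegral {n m : Type*} (A : Matrix n m ℚ_[p]) : Prop :=
  ∀ i j, ∃ x : ℤ_[p], A i j = (x : ℚ_[p])

/-- Membership in `L^{(0)}`: nondegenerate, symmetric, integral, even diagonal. -/
def InL0 {n : Type*} [Fintype n] [DecidableEq n] (A : Matrix n n ℚ_[p]) : Prop :=
  A.IsSymm ∧ A.det ≠ 0 ∧ ∀ i j, ∃ x : ℤ_[p], A i j = (if i = j then 2 else 1) * (x : ℚ_[p])

/-- Membership in `L'_{m,p}`. -/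
def InLprime {n : Type*} [Fintype n] [DecidableEq n] (A : Matrix n n ℚ_[p]) : Prop :=
  IsHalfIntegral p A ∧ ∃ r : n → ℤ_[p], InFourL p (A + outer p r)

/-- Membership in `L^{(1)}`: nondegenerate element of `L'`. -/
def InL1 {n : Type*} [Fintype n] [DecidableEq n] (A : Matrix n n ℚ_[p]) : Prop :=
  InLprime p A ∧ A.det ≠ 0

/-- `B[W⁻¹] = (W⁻¹)ᵀ B W⁻¹`. -/
def conjInv {n : Type*} [Fintype n] [DecidableEq n]
    (B : Matrix n n ℚ_[p]) (W : Matrix n n ℤ_[p]) : Matrix n n ℚ_[p] :=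
  ((q p W)⁻¹)ᵀ * B * (q p W)⁻¹

/-- `Ω̃(C)` for `C` an integral symmetric matrix. -/
def OmS {n : Type*} [Fintype n] [DecidableEq n] (C : Matrix n n ℤ_[p]) :
    Set (Matrix n n ℤ_[p]) :=
  {W | W.det ≠ 0 ∧ (conjInv p (q p C) W).IsSymm ∧ IsIntegral p (conjInv p (q p C) W)}

/-- `Ω̃^{(0)}(B)`. -/
def OmT0 {n : Type*} [Fintype n] [DecidableEq n] (B : Matrix n n ℚ_[p]) :
    Set (Matrix n n ℤ_[p]) :=
  {W | W.det ≠ 0 ∧ InL0 p (conjInv p B W)}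

/-- `Ω̃^{(1)}(B)`. -/
def OmT1 {n : Type*} [Fintype n] [DecidableEq n] (B : Matrix n n ℚ_[p]) :
    Set (Matrix n n ℤ_[p]) :=
  {W | W.det ≠ 0 ∧ InL1 p (conjInv p B W)}

/-- `Ω̃^{(j)}(B)` for `j ∈ {0,1}`. -/
def OmTJ {n : Type*} [Fintype n] [DecidableEq n] (j : ℕ) (B : Matrix n n ℚ_[p]) :
    Set (Matrix n n ℤ_[p]) :=
  {W | W.det ≠ 0 ∧ if j = 0 then InL0 p (conjInv p B W) else InL1 p (conjInv p B W)}

/-- The double coset `D_{m,i} = GL·diag(1_{m-i}, p·1_i)·GL`. -/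
def Dset {n : Type*} [Fintype n] [DecidableEq n] (i : ℕ) : Set (Matrix n n ℤ_[p]) :=
  {W | ∃ s : Finset n, s.card = i ∧
    ∃ U V : Matrix n n ℤ_[p], IsUnit U.det ∧ IsUnit V.det ∧
      W = U * Matrix.diagonal (fun j => if j ∈ s then (p : ℤ_[p]) else 1) * V}

/-- `W` and `W'` lie in the same left `GL_m(ℤ_p)`-coset. -/
def SameLeft {n : Type*} [Fintype n] [DecidableEq n] (W W' : Matrix n n ℤ_[p]) : Prop :=
  ∃ U : Matrix n n ℤ_[p], IsUnit U.det ∧ W' = U * W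

/-- `W` and `W'` lie in the same right `GL_m(ℤ_p)`-coset. -/
def SameRight {n : Type*} [Fintype n] [DecidableEq n] (W W' : Matrix n n ℤ_[p]) : Prop :=
  ∃ U : Matrix n n ℤ_[p], IsUnit U.det ∧ W' = W * U

/-- `φ` induces a bijection between the sets of left `GL(ℤ_p)`-cosets of `Ω` and `Ω'`. -/
def InducesLeftBij {n n' : Type*} [Fintype n] [DecidableEq n] [Fintype n'] [DecidableEq n']
    (φ : Matrix n n ℤ_[p] → Matrix n' n' ℤ_[p])
    (Ω : Set (Matrix n n ℤ_[p])) (Ω' : Set (Matrix n' n' ℤ_[p])) : Prop :=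
  (∀ W ∈ Ω, φ W ∈ Ω') ∧
  (∀ W₁ ∈ Ω, ∀ W₂ ∈ Ω, (SameLeft p W₁ W₂ ↔ SameLeft p (φ W₁) (φ W₂))) ∧
  (∀ V ∈ Ω', ∃ W ∈ Ω, SameLeft p (φ W) V)

/-- `A[Y] ≡ B mod p^a S_e`. -/
def densCond {n n' : Type*} [Fintype n] [Fintype n'] [DecidableEq n']
    (A : Matrix n n ℤ_[p]) (B : Matrix n' n' ℤ_[p]) (a : ℕ)
    (Y : Matrix n n' ℤ_[p]) : Prop :=
  ∀ i j, ((p : ℤ_[p]) ^ a * (if i = j then 2 else 1)) ∣ (Yᵀ * A * Y - B) i j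

/-- `#A_a(A,B)`: the number of solutions mod `p^a`. -/
def Acount {n n' : Type*} [Fintype n] [Fintype n'] [DecidableEq n']
    (A : Matrix n n ℤ_[p]) (B : Matrix n' n' ℤ_[p]) (a : ℕ) : ℕ :=
  Nat.card {X : Matrix n n' (ZMod (p ^ a)) //
    ∃ Y : Matrix n n' ℤ_[p], Y.map (PadicInt.toZModPow a) = X ∧ densCond p A B a Y}

/-- The local density `α_p(A,B)`. -/
def locDensPair {n n' : Type*} [Fintype n] [Fintype n'] [DecidableEq n']
    (A : Matrix n n ℤ_[p]) (B : Matrix n' n' ℤ_[p]) : ℝ :=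
  limUnder atTop (fun a : ℕ =>
    (2 : ℝ) ^ (-(if Fintype.card n = Fintype.card n' then (1 : ℤ) else 0)) *
    (p : ℝ) ^ ((a : ℤ) * (-((Fintype.card n : ℤ) * (Fintype.card n' : ℤ)) +
      ((Fintype.card n' : ℤ) * ((Fintype.card n' : ℤ) + 1)) / 2)) *
    (Acount p A B a : ℝ))

/-- The local density `α_p(A) = α_p(A,A)`. -/
def locDens {n : Type*} [Fintype n] [DecidableEq n] (A : Matrix n n ℤ_[p]) : ℝ :=
  locDensPair p A A

/-- `χ_p` on units, for `p` odd. -/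
def chiOdd (u : ℤ_[p]) : ℤ :=
  if IsSquare (u : ℚ_[p]) then 1 else if IsUnit u then -1 else 0

/-- `χ_2` on units. -/
def chi2 (u : ℤ_[2]) : ℤ :=
  if IsSquare (u : ℚ_[2]) then 1
  else if IsSquare (((5 * u : ℤ_[2]) : ℚ_[2])) then -1 else 0

/-- The set of `GL(ℤ_p)`-equivalence classes of elements of `S`. -/
def classesOf {n : Type*} [Fintype n] [DecidableEq n]
    (S : Set (Matrix n n ℤ_[p])) : Set (Set (Matrix n n ℤ_[p])) :=
  (fun A => {A' | IntEquiv p A A'}) '' S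

end KM

/-! ### Matrices over a principal ideal domain -/

namespace KM

section Generic

variable {R : Type*} [CommRing R] [IsDomain R] [IsPrincipalIdealRing R]
  {a b : Type*} [Fintype a] [DecidableEq a] [Fintype b] [DecidableEq b]

theorem isUnit_det_of_basis {R : Type*} [CommRing R] (c : Module.Basis b R (b → R)) :
    IsUnit (Matrix.of fun i l => c l i : Matrix b b R).det := by
  have h : (Matrix.of fun i l => c l i : Matrix b b R) = (Pi.basisFun R b).toMatrix c := by
    ext i l; simp [Module.Basis.toMatrix_apply]
  rw [h]
  exact Matrix.isUnit_det_of_right_inverse (Module.Basis.toMatrix_mul_toMatrix_flip _ c)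

/-- The columns of a matrix with a left inverse `L` extend to a basis by a basis of `ker L`. -/
theorem exists_completion (V₁ : Matrix (a ⊕ b) a R) (L : Matrix a (a ⊕ b) R) (h : L * V₁ = 1) :
    ∃ N : Matrix (a ⊕ b) b R, IsUnit (fromCols V₁ N).det ∧ L * N = 0 := by
  let K := LinearMap.ker L.mulVecLin
  have hLV : ∀ x, L *ᵥ (V₁ *ᵥ x) = x := fun x => by rw [mulVec_mulVec, h, one_mulVec]
  have hK : ∀ x : K, L *ᵥ (x : a ⊕ b → R) = 0 := fun x =>
    LinearMap.mem_ker.1 x.2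
  let e : ((a → R) × K) ≃ₗ[R] (a ⊕ b → R) :=
    LinearEquiv.ofBijective (V₁.mulVecLin.coprod K.subtype) (by
      constructor
      · rw [← LinearMap.ker_eq_bot, LinearMap.ker_eq_bot']
        rintro ⟨x, y⟩ hxy
        simp only [LinearMap.coprod_apply, mulVecLin_apply, Submodule.subtype_apply] at hxy
        have hx : x = 0 := by
          have := congrArg (L *ᵥ ·) hxy
          simpa [mulVec_add, hLV, hK] using this
        subst hx
        simpa using hxy
      · intro v
        refine ⟨(L *ᵥ v, ⟨v - V₁ *ᵥ (L *ᵥ v), ?_⟩), ?_⟩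
        · rw [LinearMap.mem_ker, mulVecLin_apply, mulVec_sub, hLV, sub_self]
        · simp)
  have he : ∀ z, e z = V₁ *ᵥ z.1 + (z.2 : a ⊕ b → R) := fun z => rfl
  have hfin : Module.finrank R K = Fintype.card b := by
    have := e.finrank_eq
    rw [Module.finrank_prod] at this
    simpa using this
  let bK : Module.Basis b R K :=
    (Module.finBasisOfFinrankEq R K hfin).reindex (Fintype.equivFin b).symm
  let c : Module.Basis (a ⊕ b) R (a ⊕ b → R) := ((Pi.basisFun R a).prod bK).map e
  refine ⟨Matrix.of fun i l => (bK l : a ⊕ b → R) i, ?_, ?_⟩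
  · convert isUnit_det_of_basis c using 2
    ext i (l | l)
    · simp [c, he]
    · simp [c, he]
  · ext i l
    exact congrFun (hK (bK l)) i

/-- Smith normal form, without the divisibility chain, of a square matrix of nonzero
determinant. -/
theorem exists_smith (W : Matrix b b R) (hW : W.det ≠ 0) :
    ∃ (P Q : Matrix b b R) (d : b → R), IsUnit P.det ∧ IsUnit Q.det ∧
      W = P * Matrix.diagonal d * Q := by
  have hinj : Function.Injective W.mulVecLin := by
    have := Matrix.mulVec_injective_of_det_ne_zero hW
    exact this
  let e := LinearEquiv.ofInjective W.mulVecLin hinj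
  obtain ⟨b', d, ab', h⟩ := Submodule.exists_smith_normal_form_of_rank_eq (Pi.basisFun R b)
    (N := LinearMap.range W.mulVecLin) e.finrank_eq.symm
  let c := ab'.map e.symm
  have hc : ∀ i, W *ᵥ (c i) = d i • b' i := fun i => by
    rw [← h i]
    have : e (c i) = ab' i := by simp [c]
    rw [← this]; rfl
  have hC := isUnit_det_of_basis c
  set C : Matrix b b R := Matrix.of fun i l => c l i
  refine ⟨Matrix.of fun i l => b' l i, C⁻¹, d, isUnit_det_of_basis b',
    Matrix.isUnit_nonsing_inv_det _ hC, ?_⟩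
  have : W * C = (Matrix.of fun i l => b' l i) * Matrix.diagonal d := by
    ext i l
    rw [Matrix.mul_diagonal]
    have := congrFun (hc l) i
    rw [Pi.smul_apply, smul_eq_mul, mul_comm] at this
    exact this
  rw [← this, Matrix.mul_nonsing_inv_cancel_right _ _ hC]

end Generic

/-! ### The double cosets `D_{m,i}` -/

theorem Dset_iff {a b : Type*} [Fintype a] [DecidableEq a] [Fintype b] [DecidableEq b]
    (i : ℕ) (W : Matrix b b ℤ_[2]) (hW : W.det ≠ 0) :
    W ∈ Dset 2 i ↔ fromBlocks (1 : Matrix a a ℤ_[2]) 0 0 W ∈ Dset 2 i := by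
  have h2 : Prime (2 : ℤ_[2]) := by exact_mod_cast PadicInt.prime_p (p := 2)
  constructor
  · rintro ⟨s, hs, U, V, hU, hV, rfl⟩
    refine ⟨s.map Function.Embedding.inr, by simpa using hs, fromBlocks 1 0 0 U,
      fromBlocks 1 0 0 V, by simpa using hU, by simpa using hV, ?_⟩
    have : (Matrix.diagonal fun j : a ⊕ b => if j ∈ s.map Function.Embedding.inr then
        ((2 : ℕ) : ℤ_[2]) else 1) =
        fromBlocks 1 0 0 (Matrix.diagonal fun j => if j ∈ s then ((2 : ℕ) : ℤ_[2]) else 1) := by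
      rw [← Matrix.diagonal_one, Matrix.fromBlocks_diagonal]
      congr 1
      ext (j | j) <;> simp
    rw [this]
    simp [fromBlocks_multiply]
  · rintro ⟨s, hs, U, V, hU, hV, h⟩
    obtain ⟨P, Q, d, hP, hQ, hPQ⟩ := exists_smith W hW
    have hDD : (Matrix.diagonal fun j => if j ∈ s then (1 : ℤ_[2]) else 2) *
        (Matrix.diagonal fun j => if j ∈ s then ((2 : ℕ) : ℤ_[2]) else 1) =
        (2 : ℤ_[2]) • (1 : Matrix (a ⊕ b) (a ⊕ b) ℤ_[2]) := by
      rw [Matrix.diagonal_mul_diagonal, Matrix.smul_one_eq_diagonal]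
      congr 1
      ext j
      split_ifs <;> simp
    -- `Y` is a left inverse of `1 ⊥ W` up to the factor `2`.
    obtain ⟨Y, hY⟩ : ∃ Y : Matrix (a ⊕ b) (a ⊕ b) ℤ_[2],
        Y * fromBlocks (1 : Matrix a a ℤ_[2]) 0 0 W = (2 : ℤ_[2]) • 1 := by
      refine ⟨V⁻¹ * (Matrix.diagonal fun j => if j ∈ s then (1 : ℤ_[2]) else 2) * U⁻¹, ?_⟩
      rw [h]
      calc _ = V⁻¹ * ((Matrix.diagonal fun j => if j ∈ s then (1 : ℤ_[2]) else 2) *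
            ((U⁻¹ * U) * (Matrix.diagonal fun j => if j ∈ s then ((2 : ℕ) : ℤ_[2]) else 1))) * V := by
            simp only [Matrix.mul_assoc]
        _ = _ := by
            rw [Matrix.nonsing_inv_mul _ hU, Matrix.one_mul, hDD]
            simp [Matrix.nonsing_inv_mul _ hV]
    have hY' : Y.toBlocks₂₂ * W = (2 : ℤ_[2]) • 1 := by
      have := congrArg Matrix.toBlocks₂₂ hY
      rw [← fromBlocks_toBlocks Y, fromBlocks_multiply, ← fromBlocks_one, fromBlocks_smul] at this
      simpa using this
    have hd : ∀ l, d l ∣ 2 := by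
      have h3 : (Q * Y.toBlocks₂₂ * P) * Matrix.diagonal d = (2 : ℤ_[2]) • 1 := by
        have h4 : (Q * (Y.toBlocks₂₂ * W)) * Q⁻¹ = (2 : ℤ_[2]) • 1 := by
          rw [hY']; simp [Matrix.mul_nonsing_inv _ hQ]
        rw [← h4, hPQ]
        simp only [Matrix.mul_assoc, Matrix.mul_nonsing_inv _ hQ, Matrix.mul_one]
      intro l
      have := congrFun (congrFun h3 l) l
      rw [Matrix.mul_diagonal] at this
      simp only [Matrix.smul_apply, one_apply_eq, smul_eq_mul, mul_one] at this
      exact Dvd.intro_left _ this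
    have hdu : ∀ l, ∃ u : ℤ_[2]ˣ, d l = (if ¬ IsUnit (d l) then 2 else 1) * u := by
      intro l
      by_cases hl : IsUnit (d l)
      · exact ⟨hl.unit, by simp [hl]⟩
      · obtain ⟨y, hy⟩ := hd l
        rcases h2.irreducible.isUnit_or_isUnit hy with h' | h'
        · exact absurd h' hl
        · refine ⟨h'.unit⁻¹, ?_⟩
          simp only [hl, not_false_eq_true, if_true]
          rw [hy, mul_assoc]
          simp
    choose u hu using hdu
    let t : Finset b := Finset.univ.filter fun l => ¬ IsUnit (d l)
    have hdiag : Matrix.diagonal d =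
        (Matrix.diagonal fun l => if l ∈ t then ((2 : ℕ) : ℤ_[2]) else 1) *
          Matrix.diagonal (fun l => (u l : ℤ_[2])) := by
      rw [Matrix.diagonal_mul_diagonal]
      congr 1
      ext1 l
      conv_lhs => rw [hu l]
      simp [t]
    have hu' : IsUnit (Matrix.diagonal (fun l => (u l : ℤ_[2]))).det := by
      rw [Matrix.det_diagonal]
      simp [IsUnit.prod_iff]
    have hWP : W = P * (Matrix.diagonal fun l => if l ∈ t then ((2 : ℕ) : ℤ_[2]) else 1) *
        (Matrix.diagonal (fun l => (u l : ℤ_[2])) * Q) := by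
      rw [hPQ, hdiag]; simp only [Matrix.mul_assoc]
    have hQ' : IsUnit (Matrix.diagonal (fun l => (u l : ℤ_[2])) * Q).det := by
      rw [Matrix.det_mul]; exact hu'.mul hQ
    refine ⟨t, ?_, P, _, hP, hQ', hWP⟩
    -- Comparing determinants identifies the number of non-unit elementary divisors.
    have hdet := congrArg Matrix.det h
    rw [Matrix.det_fromBlocks_zero₂₁, Matrix.det_one, one_mul, hWP] at hdet
    simp only [Matrix.det_mul, Matrix.det_diagonal, Finset.prod_ite_mem, Finset.univ_inter,
      Finset.prod_const, hs] at hdet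
    rw [Matrix.det_mul, Matrix.det_diagonal] at hQ'
    have hassoc : Associated ((2 : ℤ_[2]) ^ t.card) ((2 : ℤ_[2]) ^ i) := by
      have e1 : Associated (P.det * ((2 : ℕ) : ℤ_[2]) ^ t.card *
          ((∏ l, (u l : ℤ_[2])) * Q.det)) ((2 : ℤ_[2]) ^ t.card) := by
        refine (associated_mul_unit_left _ _ hQ').trans ?_
        exact_mod_cast associated_unit_mul_left _ _ hP
      have e2 : Associated (U.det * ((2 : ℕ) : ℤ_[2]) ^ i * V.det) ((2 : ℤ_[2]) ^ i) := by
        refine (associated_mul_unit_left _ _ hV).trans ?_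
        exact_mod_cast associated_unit_mul_left _ _ hU
      rw [hdet] at e1
      exact e1.symm.trans e2
    apply le_antisymm
    · exact (pow_dvd_pow_iff h2.ne_zero h2.not_isUnit).1 hassoc.dvd
    · exact (pow_dvd_pow_iff h2.ne_zero h2.not_isUnit).1 hassoc.symm.dvd

/-! ### Integral description of `Ω̃^{(j)}` -/

/-- For `j ∈ {0, 1}`: the integral matrices underlying `L^{(j)}`, without the nondegeneracy
condition, in parametrized form. For `j = 0` these are the even matrices `T + Tᵀ`; for `j = 1` the
matrices `2 (T + Tᵀ) - rᵀr`, where `2 (T + Tᵀ)` is the general element of `4 L_{m,2}`. -/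
def InE {n : Type*} (j : ℕ) (C : Matrix n n ℤ_[2]) : Prop :=
  ∃ (T : Matrix n n ℤ_[2]) (r : n → ℤ_[2]),
    C = (2 : ℤ_[2]) ^ j • (T + Tᵀ) - (j : ℤ_[2]) • vecMulVec r r

theorem InE.congr {n n' : Type*} [Fintype n] {j : ℕ} {C : Matrix n n ℤ_[2]}
    (h : InE j C) (U : Matrix n n' ℤ_[2]) : InE j (Uᵀ * C * U) := by
  obtain ⟨T, r, rfl⟩ := h
  refine ⟨Uᵀ * T * U, r ᵥ* U, ?_⟩
  have : vecMulVec (r ᵥ* U) (r ᵥ* U) = Uᵀ * vecMulVec r r * U := by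
    rw [Matrix.mul_vecMulVec, Matrix.vecMulVec_mul, Matrix.mulVec_transpose]
  rw [this]
  simp only [Matrix.mul_sub, Matrix.sub_mul, Matrix.mul_add, Matrix.add_mul, Matrix.mul_smul,
    Matrix.smul_mul, transpose_mul, transpose_transpose, Matrix.mul_assoc]

theorem InE.isSymm {n : Type*} {j : ℕ} {C : Matrix n n ℤ_[2]} (h : InE j C) : C.IsSymm := by
  obtain ⟨T, r, rfl⟩ := h
  ext i l
  simp [vecMulVec_apply]
  ring

/-- An even symmetric matrix is `T + Tᵀ`: take for `T` the strict upper triangle and half of the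
diagonal, for any total order on the index set. -/
theorem exists_add_transpose {n : Type*} [Finite n] {C : Matrix n n ℤ_[2]} (hs : C.IsSymm)
    (he : ∀ i, ∃ x, C i i = 2 * x) : ∃ T : Matrix n n ℤ_[2], C = T + Tᵀ := by
  have := Fintype.ofFinite n
  let f := Fintype.equivFin n
  choose x hx using he
  refine ⟨Matrix.of fun i l => if f i < f l then C i l else if i = l then x i else 0, ?_⟩
  ext i l
  rcases lt_trichotomy (f i) (f l) with h | h | h
  · have : l ≠ i := by rintro rfl; simp at h
    simp [h, h.not_gt, this]
  · obtain rfl := f.injective h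
    simp [hx, two_mul]
  · have : i ≠ l := by rintro rfl; simp at h
    simp [h, h.not_gt, this, hs.apply]

theorem coe_two : ((2 : ℤ_[2]) : ℚ_[2]) = 2 := rfl

theorem q_injective {n m : Type*} {A B : Matrix n m ℤ_[2]} (h : q 2 A = q 2 B) : A = B := by
  ext i l
  have := congrFun (congrFun h i) l
  exact Subtype.coe_injective this

theorem q_mul {n m l : Type*} [Fintype m] (A : Matrix n m ℤ_[2]) (B : Matrix m l ℤ_[2]) :
    q 2 (A * B) = q 2 A * q 2 B := by
  exact Matrix.map_mul (f := PadicInt.Coe.ringHom (p := 2))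

theorem q_transpose {n m : Type*} (A : Matrix n m ℤ_[2]) : q 2 Aᵀ = (q 2 A)ᵀ := rfl

theorem q_det_ne_zero {n : Type*} [Fintype n] [DecidableEq n] {A : Matrix n n ℤ_[2]} :
    (q 2 A).det ≠ 0 ↔ A.det ≠ 0 := by
  have : (q 2 A).det = ((A.det : ℤ_[2]) : ℚ_[2]) :=
    (RingHom.map_det (PadicInt.Coe.ringHom (p := 2)) A).symm
  rw [this]; simp

theorem inL0_q {n : Type*} [Fintype n] [DecidableEq n] {A : Matrix n n ℚ_[2]} :
    InL0 2 A ↔ A.det ≠ 0 ∧ ∃ C, InE 0 C ∧ A = q 2 C := by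
  constructor
  · rintro ⟨hs, hd, h⟩
    refine ⟨hd, ?_⟩
    choose x hx using h
    let C : Matrix n n ℤ_[2] := Matrix.of fun i l => (if i = l then 2 else 1) * x i l
    have hC : A = q 2 C := by
      ext i l
      rw [hx]
      by_cases h : i = l <;> simp [q, C, h, coe_two]
    have hCs : C.IsSymm := q_injective (by rw [q_transpose, ← hC]; exact hs)
    obtain ⟨T, hT⟩ := exists_add_transpose hCs (fun i => ⟨x i i, by simp [C]⟩)
    exact ⟨C, ⟨T, 0, by simpa using hT⟩, hC⟩
  · rintro ⟨hd, C, hE, rfl⟩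
    refine ⟨congrArg (q 2) hE.isSymm, hd, ?_⟩
    obtain ⟨T, r, rfl⟩ := hE
    intro i l
    by_cases h : i = l
    · subst h
      exact ⟨T i i, by simp [q, two_mul]⟩
    · exact ⟨T i l + T l i, by simp [q, h]⟩

theorem inL1_q {n : Type*} [Fintype n] [DecidableEq n] {A : Matrix n n ℚ_[2]} :
    InL1 2 A ↔ A.det ≠ 0 ∧ ∃ C, InE 1 C ∧ A = q 2 C := by
  constructor
  · rintro ⟨⟨-, r, hs, h⟩, hd⟩
    refine ⟨hd, ?_⟩
    choose x hx using h
    let D : Matrix n n ℤ_[2] := Matrix.of fun i l => (if i = l then 2 else 1) * x i l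
    have hD : A = q 2 ((2 : ℤ_[2]) • D - vecMulVec r r) := by
      ext i l
      have := hx i l
      by_cases h : i = l
      · simp [q, D, h, outer, vecMulVec_apply, coe_two] at this ⊢
        linear_combination 4 * this
      · simp [q, D, h, outer, vecMulVec_apply, coe_two] at this ⊢
        linear_combination 4 * this
    have hDs : D.IsSymm := by
      apply q_injective
      ext i l
      have := hs.apply i l
      rw [hx, hx] at this
      by_cases h : i = l
      · subst h; rfl
      · simpa [q, D, h, Ne.symm h] using this
    obtain ⟨T, hT⟩ := exists_add_transpose hDs (fun i => ⟨x i i, by simp [D]⟩)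
    exact ⟨_, ⟨T, r, by simp [← hT]⟩, hD⟩
  · rintro ⟨hd, C, hE, rfl⟩
    have hsym : (q 2 C).IsSymm := congrArg (q 2) hE.isSymm
    refine ⟨⟨⟨hsym, fun i l => ?_⟩, ?_⟩, hd⟩
    · by_cases h : i = l
      · exact ⟨C i l, by simp [q, h]⟩
      · exact ⟨2 * C i l, by simp [q, h, coe_two]⟩
    · obtain ⟨T, r, rfl⟩ := hE
      refine ⟨r, ?_, fun i l => ?_⟩
      · ext i l
        simp [q, outer, vecMulVec_apply, coe_two]
        ring
      · by_cases h : i = l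
        · subst h
          refine ⟨T i i, ?_⟩
          simp [q, outer, vecMulVec_apply, coe_two]
          ring
        · refine ⟨T i l + T l i, ?_⟩
          simp [q, outer, vecMulVec_apply, h, coe_two]
          ring

theorem mem_OmTJ {n : Type*} [Fintype n] [DecidableEq n] {j : ℕ} (hj : j = 0 ∨ j = 1)
    {B : Matrix n n ℤ_[2]} (hB : B.det ≠ 0) {W : Matrix n n ℤ_[2]} :
    W ∈ OmTJ 2 j (q 2 B) ↔ W.det ≠ 0 ∧ ∃ C, InE j C ∧ Wᵀ * C * W = B := by
  refine and_congr_right fun hW => ?_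
  have hqW : IsUnit (q 2 W).det := (q_det_ne_zero.2 hW).isUnit
  have key : (if j = 0 then InL0 2 (conjInv 2 (q 2 B) W) else InL1 2 (conjInv 2 (q 2 B) W)) ↔
      (conjInv 2 (q 2 B) W).det ≠ 0 ∧ ∃ C, InE j C ∧ conjInv 2 (q 2 B) W = q 2 C := by
    rcases hj with rfl | rfl
    · simpa using inL0_q
    · simpa using inL1_q
  rw [key]
  have hdet : (conjInv 2 (q 2 B) W).det ≠ 0 := by
    have h1 := q_det_ne_zero.2 hB
    have h2 : (q 2 W)⁻¹.det ≠ 0 := (Matrix.isUnit_nonsing_inv_det _ hqW).ne_zero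
    simp only [conjInv, Matrix.det_mul, Matrix.det_transpose]
    exact mul_ne_zero (mul_ne_zero h2 h1) h2
  rw [and_iff_right hdet]
  refine exists_congr fun C => and_congr_right fun _ => ?_
  have hqWt : IsUnit (q 2 W)ᵀ.det := by rwa [Matrix.det_transpose]
  constructor
  · intro h
    apply q_injective
    rw [q_mul, q_mul, ← h, q_transpose, conjInv, Matrix.transpose_nonsing_inv]
    rw [← Matrix.mul_assoc, ← Matrix.mul_assoc, Matrix.mul_nonsing_inv _ hqWt, Matrix.one_mul,
      Matrix.mul_assoc, Matrix.nonsing_inv_mul _ hqW, Matrix.mul_one]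
  · rintro rfl
    rw [q_mul, q_mul, q_transpose, conjInv, Matrix.transpose_nonsing_inv]
    rw [← Matrix.mul_assoc, ← Matrix.mul_assoc, Matrix.nonsing_inv_mul _ hqWt, Matrix.one_mul,
      Matrix.mul_assoc, Matrix.mul_nonsing_inv _ hqW, Matrix.mul_one]

/-! ### Splitting off `Θ` -/

theorem InE.fromBlocks {a b : Type*} [Finite a] {j : ℕ} {Θ : Matrix a a ℤ_[2]} (hs : Θ.IsSymm)
    (he : ∀ i, ∃ x, Θ i i = 2 * x) {D : Matrix b b ℤ_[2]} (hD : InE j D) :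
    InE j (Matrix.fromBlocks ((2 : ℤ_[2]) ^ j • Θ) 0 0 D) := by
  obtain ⟨S, hS⟩ := exists_add_transpose hs he
  obtain ⟨T, r, rfl⟩ := hD
  refine ⟨Matrix.fromBlocks S 0 0 T, Sum.elim 0 r, ?_⟩
  rw [hS]
  ext (i | i) (l | l) <;> simp [vecMulVec_apply]

/-- If `C` represents `2^j Θ` by `V₁`, with `Θ` even on the diagonal, then `C V₁` is divisible
by `2^j`. -/
theorem InE.exists_mul_eq {n a : Type*} [Fintype n] {j : ℕ} (hj : j = 0 ∨ j = 1)
    {C : Matrix n n ℤ_[2]} (hC : InE j C) {V₁ : Matrix n a ℤ_[2]} {Θ : Matrix a a ℤ_[2]}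
    (he : ∀ i, ∃ x, Θ i i = 2 * x) (h : V₁ᵀ * C * V₁ = (2 : ℤ_[2]) ^ j • Θ) :
    ∃ M : Matrix n a ℤ_[2], C * V₁ = (2 : ℤ_[2]) ^ j • M := by
  rcases hj with rfl | rfl
  · exact ⟨C * V₁, by simp⟩
  · have h2 : Prime (2 : ℤ_[2]) := by exact_mod_cast PadicInt.prime_p (p := 2)
    obtain ⟨T, r, rfl⟩ := hC
    have hr : ∀ l, ∃ t, (r ᵥ* V₁) l = 2 * t := by
      intro l
      obtain ⟨x, hx⟩ := he l
      have h3 := congrFun (congrFun h l) l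
      have h4 : V₁ᵀ * vecMulVec r r * V₁ = vecMulVec (r ᵥ* V₁) (r ᵥ* V₁) := by
        rw [Matrix.mul_vecMulVec, Matrix.vecMulVec_mul, Matrix.mulVec_transpose]
      have h5 : (V₁ᵀ * Tᵀ * V₁) l l = (V₁ᵀ * T * V₁) l l := by
        have : V₁ᵀ * Tᵀ * V₁ = (V₁ᵀ * T * V₁)ᵀ := by
          simp [Matrix.transpose_mul, Matrix.mul_assoc]
        rw [this]; rfl
      simp only [Matrix.mul_sub, Matrix.sub_mul, Matrix.mul_add, Matrix.add_mul, Matrix.mul_smul,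
        Matrix.smul_mul, h4, Matrix.sub_apply, Matrix.smul_apply, Matrix.add_apply, h5, hx,
        vecMulVec_apply, smul_eq_mul, pow_one, Nat.cast_one, one_mul] at h3
      have : (2 : ℤ_[2]) ∣ (r ᵥ* V₁) l * (r ᵥ* V₁) l :=
        ⟨2 * (V₁ᵀ * T * V₁) l l - 2 * x, by linear_combination -h3⟩
      rcases h2.dvd_or_dvd this with h' | h' <;> exact h'
    choose t ht using hr
    refine ⟨(T + Tᵀ) * V₁ - vecMulVec r t, ?_⟩
    have : r ᵥ* V₁ = (2 : ℤ_[2]) • t := funext fun l => by simpa using ht l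
    rw [Matrix.sub_mul, Matrix.smul_mul, Matrix.smul_mul, Matrix.vecMulVec_mul, this]
    ext i l
    simp [vecMulVec_apply]
    ring

/-- Every `V` representing `2^j Θ ⊥ D` by a matrix of type `InE` is, up to left multiplication by
an invertible matrix, of the form `1 ⊥ W`, with `W` representing `D` in the same sense. -/
theorem exists_factor {a b : Type*} [Fintype a] [DecidableEq a] [Fintype b] [DecidableEq b]
    {j : ℕ} (hj : j = 0 ∨ j = 1)
    {Θ : Matrix a a ℤ_[2]} (hΘu : IsUnit Θ.det) (he : ∀ i, ∃ x, Θ i i = 2 * x)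
    {D : Matrix b b ℤ_[2]} {V C : Matrix (a ⊕ b) (a ⊕ b) ℤ_[2]} (hV : V.det ≠ 0) (hC : InE j C)
    (h : Vᵀ * C * V = fromBlocks ((2 : ℤ_[2]) ^ j • Θ) 0 0 D) :
    ∃ W : Matrix b b ℤ_[2], (W.det ≠ 0 ∧ ∃ C', InE j C' ∧ Wᵀ * C' * W = D) ∧
      SameLeft 2 (fromBlocks 1 0 0 W) V := by
  obtain ⟨V₁, V₂, rfl⟩ : ∃ V₁ V₂, V = fromCols V₁ V₂ := ⟨_, _, (fromCols_toCols V).symm⟩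
  rw [transpose_fromCols, fromRows_mul, fromRows_mul_fromCols, fromBlocks_inj] at h
  obtain ⟨h11, h12, -, h22⟩ := h
  obtain ⟨M, hM⟩ := hC.exists_mul_eq hj he h11
  have h2 : (2 : ℤ_[2]) ^ j ≠ 0 := pow_ne_zero _ two_ne_zero
  have hMt : V₁ᵀ * C = (2 : ℤ_[2]) ^ j • Mᵀ := by
    rw [← transpose_smul, ← hM, transpose_mul, hC.isSymm.eq]
  rw [hMt, Matrix.smul_mul] at h11 h12
  have hM1 : Mᵀ * V₁ = Θ := smul_right_injective _ h2 h11
  have hM2 : Mᵀ * V₂ = 0 := smul_right_injective _ h2 (by simpa using h12)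
  have hL1 : (Θ⁻¹ * Mᵀ) * V₁ = 1 := by
    rw [Matrix.mul_assoc, hM1, Matrix.nonsing_inv_mul _ hΘu]
  have hL2 : (Θ⁻¹ * Mᵀ) * V₂ = 0 := by rw [Matrix.mul_assoc, hM2, Matrix.mul_zero]
  obtain ⟨N, hU, hN⟩ := exists_completion V₁ (Θ⁻¹ * Mᵀ) hL1
  set L := Θ⁻¹ * Mᵀ
  -- The coordinates of `V₂` with respect to the columns of `[V₁ | N]`.
  obtain ⟨X, W, hXW⟩ : ∃ (X : Matrix a b ℤ_[2]) (W : Matrix b b ℤ_[2]), V₂ = V₁ * X + N * W := by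
    refine ⟨((fromCols V₁ N)⁻¹ * V₂).toRows₁, ((fromCols V₁ N)⁻¹ * V₂).toRows₂, ?_⟩
    rw [← fromCols_mul_fromRows, fromRows_toRows, Matrix.mul_nonsing_inv_cancel_left _ _ hU]
  have hX : X = 0 := by
    rw [hXW, Matrix.mul_add, ← Matrix.mul_assoc, ← Matrix.mul_assoc, hL1, hN] at hL2
    simpa using hL2
  rw [hX, Matrix.mul_zero, zero_add] at hXW
  have hfac : fromCols V₁ V₂ = fromCols V₁ N * fromBlocks 1 0 0 W := by
    rw [fromCols_mul_fromBlocks, hXW]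
    simp
  refine ⟨W, ⟨?_, Nᵀ * C * N, hC.congr N, ?_⟩, fromCols V₁ N, hU, hfac⟩
  · intro h0
    apply hV
    rw [hfac, Matrix.det_mul, Matrix.det_fromBlocks_zero₂₁, h0]
    simp
  · rw [← h22, hXW, transpose_mul]
    simp only [Matrix.mul_assoc]

theorem sameLeft_iff {a b : Type*} [Fintype a] [DecidableEq a] [Fintype b] [DecidableEq b]
    (W₁ W₂ : Matrix b b ℤ_[2]) :
    SameLeft 2 W₁ W₂ ↔
      SameLeft 2 (fromBlocks (1 : Matrix a a ℤ_[2]) 0 0 W₁) (fromBlocks 1 0 0 W₂) := by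
  constructor
  · rintro ⟨U, hU, rfl⟩
    exact ⟨fromBlocks 1 0 0 U, by simpa using hU, by simp [fromBlocks_multiply]⟩
  · rintro ⟨U, hU, h⟩
    rw [← fromBlocks_toBlocks U, fromBlocks_multiply, fromBlocks_inj] at h
    simp only [Matrix.mul_one, Matrix.mul_zero, add_zero, zero_add] at h
    obtain ⟨h1, -, h3, h4⟩ := h
    refine ⟨U.toBlocks₂₂, ?_, h4⟩
    rw [← fromBlocks_toBlocks U, ← h1, ← h3, Matrix.det_fromBlocks_zero₂₁] at hU
    simpa using hU

end KM

/-- for `p = 2`, `W ↦ 1_{n₀} ⊥ W` induces a bijection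
`GL\Ω̃^{(j)}(2^{j+1}B₁) ≃ GL\Ω̃^{(j)}(2^{j}Θ ⊥ 2^{j+1}B₁)` compatible with `D_{·,i}`. -/
theorem statement7 (n₀ k j : ℕ) (hm : 1 ≤ n₀ + k) (hn₀ : Even n₀)
    (hj : j = if Even (n₀ + k) then 0 else 1)
    (Θ : Matrix (Fin n₀) (Fin n₀) ℤ_[2]) (hΘs : Θ.IsSymm) (hΘu : IsUnit Θ.det)
    (hΘe : ∀ i, ∃ x : ℤ_[2], Θ i i = 2 * x)
    (B₁ : Matrix (Fin k) (Fin k) ℤ_[2]) (hB₁s : B₁.IsSymm) (hB₁d : B₁.det ≠ 0) :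
    KM.InducesLeftBij 2
      (fun W => Matrix.fromBlocks (1 : Matrix (Fin n₀) (Fin n₀) ℤ_[2]) 0 0 W)
      (KM.OmTJ 2 j ((2 : ℚ_[2]) ^ (j + 1) • KM.q 2 B₁))
      (KM.OmTJ 2 j (Matrix.fromBlocks ((2 : ℚ_[2]) ^ j • KM.q 2 Θ) 0 0
        ((2 : ℚ_[2]) ^ (j + 1) • KM.q 2 B₁))) ∧
    ∀ i : ℕ, ∀ W ∈ KM.OmTJ 2 j ((2 : ℚ_[2]) ^ (j + 1) • KM.q 2 B₁),
      (W ∈ KM.Dset 2 i ↔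
        Matrix.fromBlocks (1 : Matrix (Fin n₀) (Fin n₀) ℤ_[2]) 0 0 W ∈ KM.Dset 2 i) := by
  have hj' : j = 0 ∨ j = 1 := by split_ifs at hj <;> simp [hj]
  have hq : (2 : ℚ_[2]) ^ (j + 1) • KM.q 2 B₁ = KM.q 2 ((2 : ℤ_[2]) ^ (j + 1) • B₁) := by
    ext; simp [KM.q, KM.coe_two]
  have hq' : Matrix.fromBlocks ((2 : ℚ_[2]) ^ j • KM.q 2 Θ) 0 0 ((2 : ℚ_[2]) ^ (j + 1) • KM.q 2 B₁)
      = KM.q 2 (Matrix.fromBlocks ((2 : ℤ_[2]) ^ j • Θ) 0 0 ((2 : ℤ_[2]) ^ (j + 1) • B₁)) := by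
    ext (i | i) (l | l) <;> simp [KM.q, KM.coe_two]
  have hd : ((2 : ℤ_[2]) ^ (j + 1) • B₁).det ≠ 0 := by
    rw [Matrix.det_smul]
    exact mul_ne_zero (pow_ne_zero _ (pow_ne_zero _ two_ne_zero)) hB₁d
  have hd' : (Matrix.fromBlocks ((2 : ℤ_[2]) ^ j • Θ) 0 0 ((2 : ℤ_[2]) ^ (j + 1) • B₁)).det ≠ 0 := by
    rw [Matrix.det_fromBlocks_zero₂₁, Matrix.det_smul]
    exact mul_ne_zero (mul_ne_zero (pow_ne_zero _ (pow_ne_zero _ two_ne_zero)) hΘu.ne_zero) hd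
  rw [hq', hq]
  refine ⟨⟨fun W hW => ?_, fun W₁ _ W₂ _ => KM.sameLeft_iff W₁ W₂, fun V hV => ?_⟩,
    fun i W hW => KM.Dset_iff i W hW.1⟩
  · obtain ⟨hW0, C, hC, hWC⟩ := (KM.mem_OmTJ hj' hd).1 hW
    refine (KM.mem_OmTJ hj' hd').2 ⟨by simpa using hW0, _, hC.fromBlocks hΘs hΘe, ?_⟩
    simp [Matrix.fromBlocks_transpose, Matrix.fromBlocks_multiply, hWC]
  · obtain ⟨hV0, C, hC, hVC⟩ := (KM.mem_OmTJ hj' hd').1 hV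
    obtain ⟨W, hW, hWV⟩ := KM.exists_factor hj' hΘu hΘe hV0 hC hVC
    exact ⟨W, (KM.mem_OmTJ hj' hd).2 hW, hWV⟩
end
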